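/- Let m be a nonempty finite word over the four unit directions of ℤ² such that the walk in ℤ² starting at the origin and following the letters of the word m·m (the concatenation of m with itself) visits no lattice point twice (i.e., m² is a self-avoiding path). Then for every integer k ≥ 1, the walk following m^k (k consecutive copies of m) starting at the origin is also self-avoiding. -/

import Mathlib

/-- The four unit directions of ℤ². -/
def Dir : Set (ℤ × ℤ) := {(1,0), (0,1), (0,-1), (-1,0)}

/-- Partial sum of the first `n` letters of a word: the `n`-th point of the walk from 0. -/
def psum (m : List (ℤ × ℤ)) (n : ℕ) : ℤ × ℤ := (m.take n).sum

/-- A word is self-avoiding (a free path) if the walk from the origin visits no point twice. -/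
def SelfAvoiding (m : List (ℤ × ℤ)) : Prop :=
  Function.Injective fun n : Fin (m.length + 1) => psum m n

/-- signed crossing number of a lattice step with a vertical ray -/
def crs (p q : ℤ × ℤ) : ℤ :=
  if 0 < p.2 then (if 0 ≤ q.1 then 1 else 0) - (if 0 ≤ p.1 then 1 else 0) else 0

/-- `d` is a unit direction, in coordinates -/
def UnitStep (d : ℤ × ℤ) : Prop :=
  (d.1 = 1 ∧ d.2 = 0) ∨ (d.1 = 0 ∧ d.2 = 1) ∨ (d.1 = 0 ∧ d.2 = -1) ∨ (d.1 = -1 ∧ d.2 = 0)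

theorem unitStep_of_dir {d : ℤ × ℤ} (h : d ∈ Dir) : UnitStep d := by
  simp only [Dir, Set.mem_insert_iff, Set.mem_singleton_iff, Prod.ext_iff] at h
  exact h

theorem ne_zero_coord {p : ℤ × ℤ} (h : p ≠ 0) : p.1 ≠ 0 ∨ p.2 ≠ 0 := by
  by_contra hc
  push Not at hc
  exact h (Prod.ext hc.1 hc.2)

theorem crs_symm (p d : ℤ × ℤ) (h : UnitStep d) : crs p (p + d) + crs (p + d) p = 0 := by
  obtain ⟨p1, p2⟩ := p
  obtain ⟨d1, d2⟩ := d
  simp only [UnitStep] at h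
  simp only [crs, Prod.mk_add_mk]
  rcases h with h | h | h | h <;> obtain ⟨rfl, rfl⟩ := h <;> split_ifs <;> omega

set_option maxHeartbeats 4000000 in
theorem crs_square (p d e : ℤ × ℤ) (hd : UnitStep d) (he : UnitStep e)
    (h0 : p ≠ 0) (h1 : p + d ≠ 0) (h2 : p - e ≠ 0) (h3 : p + d - e ≠ 0) :
    crs p (p + d) + crs (p + d) (p + d - e) = crs p (p - e) + crs (p - e) (p + d - e) := by
  have h0 := ne_zero_coord h0
  have h1 := ne_zero_coord h1
  have h2 := ne_zero_coord h2
  have h3 := ne_zero_coord h3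
  obtain ⟨p1, p2⟩ := p
  obtain ⟨d1, d2⟩ := d
  obtain ⟨e1, e2⟩ := e
  simp only [UnitStep] at hd he
  simp only [crs, Prod.mk_add_mk, Prod.mk_sub_mk] at *
  rcases hd with h | h | h | h <;> obtain ⟨rfl, rfl⟩ := h <;>
  rcases he with h | h | h | h <;> obtain ⟨rfl, rfl⟩ := h <;> split_ifs <;> omega

/-- Key winding-number lemma, for a path starting at its highest point over `v`. -/
theorem core_top (u : ℕ → ℤ × ℤ) (N : ℕ) (v : ℤ × ℤ) (j : ℤ) (hj : 2 ≤ j) (hv : 0 < v.1)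
    (hstep : ∀ c, UnitStep (u (c + 1) - u c))
    (hN : u N = u 0 + j • v)
    (htop : ∀ c, (u c).2 * v.1 - (u c).1 * v.2 ≤ (u 0).2 * v.1 - (u 0).1 * v.2)
    (hch : ∀ a b, b ≤ a → a ≤ N → u a - u b - v ≠ 0) : False := by
  set F : ℕ → ℕ → ℤ × ℤ := fun a b => u a - u b - v with hF
  have T1 : ∀ a, a + 1 ≤ N → ∀ b, b ≤ a →
      crs (F a 0) (F (a+1) 0) + ∑ i ∈ Finset.range b, crs (F (a+1) i) (F (a+1) (i+1))
      = ∑ i ∈ Finset.range b, crs (F a i) (F a (i+1)) + crs (F a b) (F (a+1) b) := by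
    intro a ha b
    induction b with
    | zero => intro _; simp
    | succ b ih =>
      intro hb
      have ih := ih (by omega)
      rw [Finset.sum_range_succ, Finset.sum_range_succ]
      have hs := crs_square (F a b) (u (a+1) - u a) (u (b+1) - u b) (hstep a) (hstep b)
        (hch _ _ (by omega) (by omega))
        (by
          have := hch (a+1) b (by omega) (by omega)
          convert this using 1; simp only [hF]; abel)
        (by
          have := hch a (b+1) (by omega) (by omega)
          convert this using 1; simp only [hF]; abel)
        (by
          have := hch (a+1) (b+1) (by omega) (by omega)
          convert this using 1; simp only [hF]; abel)
      have e1 : F a b + (u (a+1) - u a) = F (a+1) b := by simp only [hF]; abel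
      have e2 : F a b - (u (b+1) - u b) = F a (b+1) := by simp only [hF]; abel
      have e3 : F (a+1) b - (u (b+1) - u b) = F (a+1) (b+1) := by simp only [hF]; abel
      rw [e1, e2, e3] at hs
      linarith
  have T2 : ∀ a, a ≤ N → ∑ i ∈ Finset.range a, crs (F i 0) (F (i+1) 0)
      + ∑ i ∈ Finset.range a, crs (F a i) (F a (i+1)) = 0 := by
    intro a
    induction a with
    | zero => intro _; simp
    | succ a ih =>
      intro ha
      have ih := ih (by omega)
      have h1 := T1 a ha a le_rfl
      have h2 := crs_symm (F a a) (u (a+1) - u a) (hstep a)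
      have e1 : F a a + (u (a+1) - u a) = F (a+1) a := by simp only [hF]; abel
      have e2 : F a a = F (a+1) (a+1) := by simp only [hF]; abel
      rw [e1] at h2
      rw [Finset.sum_range_succ, Finset.sum_range_succ, ← e2]
      linarith
  have hT := T2 N le_rfl
  -- lower part: no crossings
  have hlow : ∀ i ∈ Finset.range N, crs (F i 0) (F (i+1) 0) = 0 := by
    intro i hi
    have hi := Finset.mem_range.1 hi
    have a1 := htop i
    have a2 := htop (i+1)
    have hs := hstep i
    simp only [UnitStep, Prod.fst_sub, Prod.snd_sub] at hs
    simp only [crs, hF, Prod.fst_sub, Prod.snd_sub]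
    by_cases hp : 0 < (u i).2 - (u 0).2 - v.2
    · have k1 : (u i).1 - (u 0).1 - v.1 ≠ 0 := by
        intro h
        have e : (u i).1 = (u 0).1 + v.1 := by omega
        rw [e] at a1
        nlinarith [mul_pos hp hv]
      by_cases hp' : 0 < (u (i+1)).2 - (u 0).2 - v.2
      · have k2 : (u (i+1)).1 - (u 0).1 - v.1 ≠ 0 := by
          intro h
          have e : (u (i+1)).1 = (u 0).1 + v.1 := by omega
          rw [e] at a2
          nlinarith [mul_pos hp' hv]
        split_ifs <;> omega
      · split_ifs <;> omega
    · rw [if_neg hp]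
  rw [Finset.sum_eq_zero hlow, zero_add] at hT
  -- upper part: telescopes
  have hup : ∀ i ∈ Finset.range N, crs (F N i) (F N (i+1)) =
      (if 0 ≤ (F N (i+1)).1 then (1:ℤ) else 0) - (if 0 ≤ (F N i).1 then 1 else 0) := by
    intro i hi
    have hi := Finset.mem_range.1 hi
    have a1 := htop i
    have a2 := htop (i+1)
    have hs := hstep i
    have n1 := ne_zero_coord (hch N i (by omega) le_rfl)
    have n2 := ne_zero_coord (hch N (i+1) (by omega) le_rfl)
    have l1 : 0 ≤ (F N i).2 * v.1 - (F N i).1 * v.2 := by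
      simp only [hF, hN, Prod.fst_sub, Prod.snd_sub, Prod.fst_add, Prod.snd_add, Prod.smul_fst,
        Prod.smul_snd, smul_eq_mul]
      nlinarith
    have l2 : 0 ≤ (F N (i+1)).2 * v.1 - (F N (i+1)).1 * v.2 := by
      simp only [hF, hN, Prod.fst_sub, Prod.snd_sub, Prod.fst_add, Prod.snd_add, Prod.smul_fst,
        Prod.smul_snd, smul_eq_mul]
      nlinarith
    have s1 : (F N (i+1)).1 = (F N i).1 - ((u (i+1)).1 - (u i).1) := by
      simp only [hF, Prod.fst_sub]; ring
    have s2 : (F N (i+1)).2 = (F N i).2 - ((u (i+1)).2 - (u i).2) := by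
      simp only [hF, Prod.snd_sub]; ring
    simp only [UnitStep, Prod.fst_sub, Prod.snd_sub] at hs
    change (F N i).1 ≠ 0 ∨ (F N i).2 ≠ 0 at n1
    change (F N (i+1)).1 ≠ 0 ∨ (F N (i+1)).2 ≠ 0 at n2
    generalize F N i = p at *
    generalize F N (i+1) = q at *
    simp only [crs]
    have k1 : p.1 = 0 → 0 < p.2 := by
      intro h
      rw [h] at l1
      have : 0 ≤ p.2 := by
        by_contra hc
        nlinarith
      omega
    have k2 : q.1 = 0 → 0 < q.2 := by
      intro h
      rw [h] at l2
      have : 0 ≤ q.2 := by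
        by_contra hc
        nlinarith
      omega
    split_ifs <;> omega
  rw [Finset.sum_congr rfl hup, Finset.sum_range_sub
    (fun i => if 0 ≤ (F N i).1 then (1:ℤ) else 0)] at hT
  have f1 : (F N N).1 < 0 := by
    simp only [hF, Prod.fst_sub]; omega
  have f2 : 0 ≤ (F N 0).1 := by
    simp only [hF, hN, Prod.fst_sub, Prod.fst_add, Prod.smul_fst, smul_eq_mul]
    nlinarith
  rw [if_neg (by omega), if_pos f2] at hT
  omega

theorem core_pos (w : ℕ → ℤ × ℤ) (N : ℕ) (v : ℤ × ℤ) (j : ℤ) (hj : 2 ≤ j) (hv : 0 < v.1)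
    (hstep : ∀ c, c < N → UnitStep (w (c + 1) - w c))
    (hN : w N = w 0 + j • v)
    (hch : ∀ i : ℤ, 1 ≤ i → i < j → ∀ a b, a ≤ N → b ≤ N → w a - w b ≠ i • v) : False := by
  have hN0 : 0 < N := by
    rcases Nat.eq_zero_or_pos N with h | h
    · subst h
      have := congrArg Prod.fst hN
      simp only [Prod.fst_add, Prod.smul_fst, smul_eq_mul] at this
      nlinarith
    · exact h
  set W : ℕ → ℤ × ℤ := fun c => w (c % N) + ((c / N : ℕ) : ℤ) • (j • v) with hW
  have hWstep : ∀ c, UnitStep (W (c + 1) - W c) := by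
    intro c
    have hr := Nat.mod_lt c hN0
    have hs := hstep (c % N) hr
    have hc := Nat.div_add_mod c N
    by_cases h : c % N + 1 = N
    · have e : c + 1 = N * (c / N + 1) := by rw [Nat.mul_add]; omega
      have e1 : (c + 1) / N = c / N + 1 := by rw [e]; exact Nat.mul_div_cancel_left _ hN0
      have e2 : (c + 1) % N = 0 := by rw [e]; exact Nat.mul_mod_right _ _
      rw [h, hN] at hs
      convert hs using 1
      simp only [hW, e1, e2]
      push_cast
      rw [add_smul, one_smul]
      abel
    · have h' : c % N + 1 < N := by omega
      have e : c + 1 = (c % N + 1) + N * (c / N) := by omega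
      have e1 : (c + 1) / N = c / N := by
        rw [e, Nat.add_mul_div_left _ _ hN0, Nat.div_eq_of_lt h', zero_add]
      have e2 : (c + 1) % N = c % N + 1 := by
        rw [e, Nat.add_mul_mod_self_left, Nat.mod_eq_of_lt h']
      convert hs using 1
      simp only [hW, e1, e2]
      abel
  have hWN : ∀ c, W (c + N) = W c + j • v := by
    intro c
    simp only [hW, Nat.add_mod_right, Nat.add_div_right _ hN0]
    push_cast
    rw [add_smul, one_smul]
    abel
  have hWch : ∀ a b, b ≤ a → a ≤ b + N → W a - W b ≠ v := by
    intro a b hba hab h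
    have ra := (Nat.mod_lt a hN0).le
    have rb := (Nat.mod_lt b hN0).le
    have h1 : b / N ≤ a / N := Nat.div_le_div_right hba
    have h2 : a / N ≤ b / N + 1 := by
      rw [← Nat.add_div_right _ hN0]; exact Nat.div_le_div_right hab
    rcases (by omega : a / N = b / N ∨ a / N = b / N + 1) with h3 | h3
    · apply hch 1 le_rfl (by omega) _ _ ra rb
      rw [one_smul, ← h]
      simp only [hW, h3]; abel
    · apply hch (j - 1) (by omega) (by omega) _ _ rb ra
      rw [sub_smul, one_smul]
      nth_rewrite 2 [← h]
      simp only [hW, h3]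
      push_cast
      rw [add_smul, one_smul]
      abel
  set L : ℤ × ℤ → ℤ := fun p => p.2 * v.1 - p.1 * v.2 with hL
  obtain ⟨c0, hc0, hmax⟩ := Finset.exists_max_image (Finset.range N) (fun c => L (w c))
    ⟨0, Finset.mem_range.2 hN0⟩
  have hLW : ∀ c, L (W c) = L (w (c % N)) := by
    intro c
    simp only [hW, hL, Prod.fst_add, Prod.snd_add, Prod.smul_fst, Prod.smul_snd, smul_eq_mul]
    ring
  refine core_top (fun c => W (c + c0)) N v j hj hv ?_ ?_ ?_ ?_
  · intro c
    have := hWstep (c + c0)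
    rwa [show c + c0 + 1 = c + 1 + c0 by ring] at this
  · simp only [zero_add]; rw [add_comm N, hWN]
  · intro c
    have h := hmax ((c + c0) % N) (Finset.mem_range.2 (Nat.mod_lt _ hN0))
    have e := hLW c0
    rw [Nat.mod_eq_of_lt (Finset.mem_range.1 hc0)] at e
    have e' := hLW (c + c0)
    simp only [zero_add]
    change L (W (c + c0)) ≤ L (W c0)
    rw [e, e']; exact h
  · intro a b hba ha h
    exact hWch (a + c0) (b + c0) (by omega) (by omega) (sub_eq_zero.1 h)

theorem core_ne (w : ℕ → ℤ × ℤ) (N : ℕ) (v : ℤ × ℤ) (j : ℤ) (hj : 2 ≤ j) (hv : v.1 ≠ 0)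
    (hstep : ∀ c, c < N → UnitStep (w (c + 1) - w c))
    (hN : w N = w 0 + j • v)
    (hch : ∀ i : ℤ, 1 ≤ i → i < j → ∀ a b, a ≤ N → b ≤ N → w a - w b ≠ i • v) : False := by
  rcases lt_or_gt_of_ne hv with h | h
  · refine core_pos (fun c => -w c) N (-v) j hj (by simpa using h) ?_ ?_ ?_
    · intro c hc
      have := hstep c hc
      simp only [UnitStep, Prod.fst_sub, Prod.snd_sub, Prod.fst_neg, Prod.snd_neg] at this ⊢
      omega
    · simp only [hN, smul_neg]; abel
    · intro i h1 h2 a b ha hb he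
      apply hch i h1 h2 a b ha hb
      rw [smul_neg] at he
      rw [← neg_inj, ← he]; abel
  · exact core_pos w N v j hj h hstep hN hch

theorem core (w : ℕ → ℤ × ℤ) (N : ℕ) (v : ℤ × ℤ) (j : ℤ) (hj : 2 ≤ j) (hv : v ≠ 0)
    (hstep : ∀ c, c < N → UnitStep (w (c + 1) - w c))
    (hN : w N = w 0 + j • v)
    (hch : ∀ i : ℤ, 1 ≤ i → i < j → ∀ a b, a ≤ N → b ≤ N → w a - w b ≠ i • v) : False := by
  by_cases h : v.1 = 0
  · have h2 : v.2 ≠ 0 := by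
      rcases ne_zero_coord hv with h' | h'
      · exact absurd h h'
      · exact h'
    refine core_ne (fun c => (w c).swap) N v.swap j hj (by simpa using h2) ?_ ?_ ?_
    · intro c hc
      have := hstep c hc
      simp only [UnitStep, Prod.fst_sub, Prod.snd_sub, Prod.fst_swap, Prod.snd_swap] at this ⊢
      omega
    · simp only [hN]; rfl
    · intro i h1 h2 a b ha hb he
      apply hch i h1 h2 a b ha hb
      exact Prod.swap_injective he
  · exact core_ne w N v j hj h hstep hN hch

theorem no_chord (P : ℕ → ℤ × ℤ) (n : ℕ) (v : ℤ × ℤ) (hv : v ≠ 0)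
    (hstep : ∀ c, c < n → UnitStep (P (c + 1) - P c))
    (h1 : ∀ s t, s < n → t < n → P s ≠ P t + v) (k : ℕ) :
    1 ≤ k → ∀ s t, s < n → t < n → P s ≠ P t + (k : ℤ) • v := by
  induction k using Nat.strong_induction_on with
  | _ k ih =>
    intro hk s t hs ht he
    rcases (by omega : k = 1 ∨ 2 ≤ k) with rfl | hk2
    · apply h1 s t hs ht; simpa using he
    have key : ∀ i : ℤ, 1 ≤ i → i < k → ∀ a b, a < n → b < n → P a ≠ P b + i • v := by
      intro i hi1 hi2 a b ha hb
      have := ih i.toNat (by omega) (by omega) a b ha hb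
      rwa [Int.toNat_of_nonneg (by omega)] at this
    rcases le_total t s with hts | hts
    · refine core (fun c => P (t + c)) (s - t) v k (by exact_mod_cast hk2) hv ?_ ?_ ?_
      · intro c hc; exact hstep (t + c) (by omega)
      · simp only [add_zero]; rw [← he]; congr 1; omega
      · intro i hi1 hi2 a b ha hb hab
        apply key i hi1 hi2 (t + a) (t + b) (by omega) (by omega)
        rw [← hab]; abel
    · refine core (fun c => P (s + c)) (t - s) (-v) k (by exact_mod_cast hk2)
        (neg_ne_zero.2 hv) ?_ ?_ ?_
      · intro c hc; exact hstep (s + c) (by omega)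
      · simp only [add_zero]; rw [he, show s + (t - s) = t by omega, smul_neg]; abel
      · intro i hi1 hi2 a b ha hb hab
        apply key i hi1 hi2 (s + b) (s + a) (by omega) (by omega)
        rw [smul_neg] at hab
        rw [← neg_inj.2 hab |>.trans (neg_neg _)]; abel

theorem psum_append_lt (m l : List (ℤ × ℤ)) (i : ℕ) (h : i ≤ m.length) :
    psum (m ++ l) i = psum m i := by
  simp only [psum]; rw [List.take_append_of_le_length h]

theorem psum_append_add (m l : List (ℤ × ℤ)) (i : ℕ) :
    psum (m ++ l) (m.length + i) = m.sum + psum l i := by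
  simp only [psum]; rw [List.take_length_add_append, List.sum_append]

theorem psum_flatten (m : List (ℤ × ℤ)) (hm : 0 < m.length) (k : ℕ) :
    ∀ i, i ≤ k * m.length → psum (List.flatten (List.replicate k m)) i
      = ((i / m.length : ℕ) : ℤ) • m.sum + psum m (i % m.length) := by
  induction k with
  | zero =>
    intro i hi
    have : i = 0 := by simpa using hi
    subst this
    simp [psum]
  | succ k ih =>
    intro i hi
    rw [List.replicate_succ, List.flatten_cons]
    rcases lt_or_ge i m.length with h | h
    · rw [psum_append_lt _ _ _ h.le, Nat.div_eq_of_lt h, Nat.mod_eq_of_lt h]; simp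
    · obtain ⟨a, rfl⟩ := Nat.exists_eq_add_of_le h
      rw [psum_append_add, ih a (by rw [Nat.add_mul] at hi; omega), Nat.add_div_left _ hm,
        Nat.add_mod_left]
      push_cast
      rw [add_smul, one_smul]
      abel

theorem stmt0 (m : List (ℤ × ℤ)) (hm : m ≠ []) (hdir : ∀ d ∈ m, d ∈ Dir)
    (hsq : SelfAvoiding (m ++ m)) :
    ∀ k : ℕ, 1 ≤ k → SelfAvoiding (List.flatten (List.replicate k m)) := by
  intro k _
  have hn : 0 < m.length := List.length_pos_iff.2 hm
  have hinj : ∀ a b, a ≤ m.length + m.length → b ≤ m.length + m.length →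
      psum (m ++ m) a = psum (m ++ m) b → a = b := by
    intro a b ha hb h
    have := @hsq ⟨a, by rw [List.length_append]; omega⟩ ⟨b, by rw [List.length_append]; omega⟩ h
    exact congrArg Fin.val this
  have hv : m.sum ≠ 0 := by
    intro h
    have := hinj 0 (m.length + 0) (by omega) (by omega) (by
      rw [psum_append_add, h]; simp [psum])
    omega
  have hstep : ∀ c, c < m.length → UnitStep (psum m (c + 1) - psum m c) := by
    intro c hc
    apply unitStep_of_dir
    simp only [psum]
    rw [List.sum_take_succ _ _ hc, add_sub_cancel_left]
    exact hdir _ (List.getElem_mem hc)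
  have h1 : ∀ s t, s < m.length → t < m.length → psum m s ≠ psum m t + m.sum := by
    intro s t hs ht h
    have := hinj s (m.length + t) (by omega) (by omega) (by
      rw [psum_append_add, psum_append_lt _ _ _ hs.le, h, add_comm])
    omega
  have hch := no_chord (psum m) m.length m.sum hv hstep h1
  have hlen : (List.flatten (List.replicate k m)).length = k * m.length := by simp
  have main : ∀ a b, a ≤ k * m.length → b ≤ k * m.length → a / m.length ≤ b / m.length →
      psum (List.flatten (List.replicate k m)) a = psum (List.flatten (List.replicate k m)) b →
      a = b := by
    intro a b ha hb hab h
    rw [psum_flatten m hn k a ha, psum_flatten m hn k b hb] at h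
    have ra := Nat.mod_lt a hn
    have rb := Nat.mod_lt b hn
    obtain ⟨q, hq⟩ := Nat.exists_eq_add_of_le hab
    rw [hq] at h
    push_cast at h
    rw [add_smul, add_assoc, add_right_inj] at h
    rcases Nat.eq_zero_or_pos q with rfl | hq0
    · have := hinj (a % m.length) (b % m.length) (by omega) (by omega) (by
        rw [psum_append_lt _ _ _ ra.le, psum_append_lt _ _ _ rb.le, h]; simp)
      rw [← Nat.div_add_mod a m.length, ← Nat.div_add_mod b m.length, this, hq, add_zero]
    · exact absurd (h.trans (add_comm _ _)) (hch q hq0 _ _ ra rb)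
  rintro ⟨a, ha⟩ ⟨b, hb⟩ h
  rw [hlen] at ha hb
  apply Fin.ext
  change a = b
  rcases le_total (a / m.length) (b / m.length) with hab | hab
  · exact main a b (by omega) (by omega) hab h
  · exact (main b a (by omega) (by omega) hab h.symm).symm
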